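/- There exist constants C > 0 and y₀ < 0 such that for all y ≤ y₀, | A(y) − (1/(2√(2π))) |y| e^{−2y²} − (1/(4√(2π))) (log|y|/|y|) e^{−2y²} − (1/(4√(2π))) ((γ − 1)/2 + log 2) e^{−2y²}/|y| | ≤ C e^{−2y²}/y², where γ is the Euler–Mascheroni constant. -/

import Mathlib

open MeasureTheory Real Filter

/-- The error function `erf`. -/
noncomputable def erf (x : ℝ) : ℝ := (2 / Real.sqrt Real.pi) * ∫ t in (0 : ℝ)..x, Real.exp (-t ^ 2)

/-- The complementary error function `erfc`. -/
noncomputable def erfc (x : ℝ) : ℝ := 1 - erf x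

noncomputable def A₁ (y : ℝ) : ℝ :=
  -(1 / (2 * Real.sqrt (2 * Real.pi))) *
    ∫ t in Set.Ioi (0 : ℝ), Real.exp (-2 * (t - y) ^ 2) * erfc t

noncomputable def A₂ (y : ℝ) : ℝ :=
  (1 / Real.sqrt (2 * Real.pi)) *
    ∫ t in Set.Ioi (0 : ℝ),
      Real.exp (-2 * (t - y) ^ 2) * t * (Real.exp (-t ^ 2) / Real.sqrt Real.pi - t * erfc t)

noncomputable def A₃ (y : ℝ) : ℝ :=
  (1 / 4) * (1 + erf (Real.sqrt 2 * y)) *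
    (-(y * Real.exp (-2 * y ^ 2)) / Real.sqrt (2 * Real.pi) +
      (1 / 4 + y ^ 2) * (1 - erf (Real.sqrt 2 * y)))

noncomputable def A₄ (y : ℝ) : ℝ :=
  -(1 / Real.sqrt (2 * Real.pi)) *
    ∫ t₁ in Set.Ioi (0 : ℝ), ∫ t₂ in Set.Ioo (0 : ℝ) t₁,
      (1 / (t₁ - t₂)) *
        (Real.exp (-2 * (t₁ - y) ^ 2) * (erf (t₁ - t₂) + erf (Real.sqrt 2 * (t₂ - y))) +
          Real.exp (-2 * (t₂ - y) ^ 2) * (erf (t₁ - t₂) - erf (Real.sqrt 2 * (t₁ - y))))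

noncomputable def A (y : ℝ) : ℝ := A₁ y + A₂ y + A₃ y + A₄ y

/-!
Put `s = -y` and rescale by `√(2π) e^{2s²}`. The Gaussian `e^{-2(t+s)²}` then becomes
`e^{-4st} e^{-2t²}`, so `A₁` and `A₂` are Laplace integrals at the rate `4s`, read off from the
values of their integrands at `t = 0`: they contribute `-1/(8s)` and `0`, up to `O(s⁻²)`. In `A₃`,
two consecutive continued-fraction convergents of Mills' ratio enclose `erfc (√2 s)` tightly enough
to leave `s/2`.

The logarithm comes from `A₄`. In the coordinates `u = t₁ - t₂`, `t = t₂` its integrand has the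
singular factor `1/u`, but up to a remainder of size `e^{-4su} e^{-4st}` it equals
`-(erfc u / u) (g t - g (t + u))` with `g t = e^{-4st} e^{-2t²}`. Integrating over `t` telescopes
this to `-(erfc u / u) ∫₀ᵘ g`, and replacing `g` by `e^{-4st}` leaves the integral
`(4s)⁻¹ ∫ (erfc u / u) (1 - e^{-4su}) du`. Since
`erfc u (1 - e^{-au}) = (erfc u - e^{-au}) + erf u e^{-au}`, where the last term contributes
`O(1/a)`, an integration by parts against `log u` reduces the integral to `Γ'(1)` and `Γ'(1/2)`,
with value `log a + γ/2 - log 2`.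
-/

section Integrals

open Set Topology Asymptotics

variable {E : Type*} [NormedAddCommGroup E]

lemma integrableOn_Ioi_comp_add_right_iff {g : ℝ → E} {c u : ℝ} :
    IntegrableOn (fun t => g (t + u)) (Ioi c) ↔ IntegrableOn g (Ioi (c + u)) := by
  simpa [Function.comp_def] using (measurePreserving_add_right volume u).integrableOn_comp_preimage
    (measurableEmbedding_addRight u) (f := g) (s := Ioi (c + u))

variable [NormedSpace ℝ E]

lemma norm_integral_sub_integral_le_of_norm_sub_le {α : Type*} [MeasurableSpace α]
    {μ : Measure α} {f g : α → E} {b : α → ℝ} (hf : AEStronglyMeasurable f μ)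
    (hg : Integrable g μ) (hb : Integrable b μ) (h : ∀ᵐ x ∂μ, ‖f x - g x‖ ≤ b x) :
    ‖(∫ x, f x ∂μ) - ∫ x, g x ∂μ‖ ≤ ∫ x, b x ∂μ := by
  have hf_int : Integrable f μ := by
    refine integrable_of_norm_sub_le hf hg hb ?_
    simpa only [norm_sub_rev] using h
  rw [← integral_sub hf_int hg]
  exact norm_integral_le_of_norm_le hb h

lemma integral_Ioi_integral_Ioo_eq_integral_integral_add {F : ℝ → ℝ → E}
    (hF : Integrable (fun p : ℝ × ℝ => F (p.2 + p.1) p.2)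
      ((volume.restrict (Ioi 0)).prod (volume.restrict (Ioi 0)))) :
    ∫ x in Ioi 0, ∫ t in Ioo 0 x, F x t = ∫ u in Ioi 0, ∫ t in Ioi 0, F (t + u) t := by
  set G : ℝ × ℝ → E := (Ioi 0 ×ˢ Ioi 0).indicator fun p => F (p.2 + p.1) p.2 with hG
  have hG_int : Integrable G (volume.prod volume) := by
    rw [hG, integrable_indicator_iff (measurableSet_Ioi.prod measurableSet_Ioi), IntegrableOn,
      ← Measure.prod_restrict]
    exact hF
  have hG_shear : Integrable (fun p : ℝ × ℝ => G (p.1 - p.2, p.2)) (volume.prod volume) :=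
    (measurePreserving_sub_prod volume volume).integrable_comp_of_integrable hG_int
  have inner_Ioo (x : ℝ) :
      (Ioi 0).indicator (fun x => ∫ t in Ioo 0 x, F x t) x = ∫ t, G (x - t, t) := by
    by_cases hx : 0 < x
    · rw [indicator_of_mem (mem_Ioi.2 hx), ← integral_indicator measurableSet_Ioo]
      congr 1 with t
      simp [hG, indicator_apply, and_comm]
    · rw [indicator_of_notMem (by simpa using hx), integral_eq_zero_of_ae]
      filter_upwards with t
      simp only [hG, indicator_apply, mem_prod, mem_Ioi, Pi.zero_apply, ite_eq_right_iff]
      intro ht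
      linarith
  have inner_Ioi (u : ℝ) :
      ∫ t, G (u, t) = (Ioi 0).indicator (fun u => ∫ t in Ioi 0, F (t + u) t) u := by
    by_cases hu : 0 < u
    · rw [indicator_of_mem (mem_Ioi.2 hu), ← integral_indicator measurableSet_Ioi]
      simp [hG, indicator_apply, hu]
    · simp [hG, hu]
  calc ∫ x in Ioi 0, ∫ t in Ioo 0 x, F x t
      = ∫ x, ∫ t, G (x - t, t) := by
        rw [← integral_indicator measurableSet_Ioi]
        exact integral_congr_ae (.of_forall inner_Ioo)
    _ = ∫ t, ∫ x, G (x - t, t) := integral_integral_swap hG_shear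
    _ = ∫ t, ∫ u, G (u, t) := by
        congr 1 with t
        exact integral_sub_right_eq_self (fun u => G (u, t)) t
    _ = ∫ u, ∫ t, G (u, t) := (integral_integral_swap (f := fun u t => G (u, t)) hG_int).symm
    _ = ∫ u in Ioi 0, ∫ t in Ioi 0, F (t + u) t := by
        rw [← integral_indicator measurableSet_Ioi]
        exact integral_congr_ae (.of_forall inner_Ioi)

lemma integral_Ioi_comp_add_right {g : ℝ → E} {c u : ℝ} :
    ∫ t in Ioi c, g (t + u) = ∫ t in Ioi (c + u), g t := by
  simpa using (measurePreserving_add_right volume u).setIntegral_preimage_emb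
    (measurableEmbedding_addRight u) g (Ioi (c + u))

lemma integral_Ioi_sub_comp_add_right {g : ℝ → E} {c u : ℝ} (hg : IntegrableOn g (Ioi c))
    (hu : 0 ≤ u) : ∫ t in Ioi c, (g t - g (t + u)) = ∫ t in c..c + u, g t := by
  have hcu : c ≤ c + u := le_add_of_nonneg_right hu
  have hg_shift : IntegrableOn (fun t => g (t + u)) (Ioi c) :=
    integrableOn_Ioi_comp_add_right_iff.2 (hg.mono_set (Ioi_subset_Ioi hcu))
  rw [integral_sub hg hg_shift, integral_Ioi_comp_add_right,
    intervalIntegral.integral_Ioi_sub_Ioi hg hcu]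

lemma integral_mul_inv_eq_neg_integral_deriv_mul_log {h h' : ℝ → ℝ}
    (hderiv : ∀ u ∈ Ici 0, HasDerivAt h (h' u) u) (h_zero : h 0 = 0)
    (h_atTop : h =O[atTop] fun u => u⁻¹) (h_int : IntegrableOn (fun u => h u * u⁻¹) (Ioi 0))
    (h'_int : IntegrableOn (fun u => h' u * log u) (Ioi 0)) :
    ∫ u in Ioi 0, h u * u⁻¹ = -∫ u in Ioi 0, h' u * log u := by
  have tendsto_zero : Tendsto (h * log) (𝓝[>] 0) (𝓝 0) := by
    have h_lin : h =O[𝓝[>] 0] fun u => u := by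
      simpa [h_zero] using ((hderiv 0 self_mem_Ici).isBigO_sub).mono nhdsWithin_le_nhds
    refine (h_lin.mul (isBigO_refl log _)).trans_tendsto ?_
    simpa [mul_comm] using tendsto_log_mul_rpow_nhdsGT_zero one_pos
  have tendsto_atTop : Tendsto (h * log) atTop (𝓝 0) := by
    refine (h_atTop.mul (isBigO_refl log _)).trans_tendsto ?_
    simpa [div_eq_inv_mul] using isLittleO_log_id_atTop.tendsto_div_nhds_zero
  rw [integral_Ioi_mul_deriv_eq_deriv_mul (fun u hu => hderiv u (mem_Ici_of_Ioi hu))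
    (fun u hu => hasDerivAt_log (ne_of_gt hu)) h_int h'_int tendsto_zero tendsto_atTop]
  ring

end Integrals

section Laplace

open Set

variable {a : ℝ}

lemma integral_exp_neg_mul_Ioi_zero (ha : 0 < a) : ∫ t in Ioi 0, exp (-(a * t)) = 1 / a := by
  simpa [← neg_mul, neg_div] using integral_exp_mul_Ioi (neg_lt_zero.2 ha) 0

lemma integrableOn_exp_neg_mul_Ioi_zero (ha : 0 < a) :
    IntegrableOn (fun t => exp (-(a * t))) (Ioi 0) := by
  simpa only [neg_mul] using exp_neg_integrableOn_Ioi 0 ha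

lemma integral_mul_exp_neg_mul_Ioi_zero (ha : 0 < a) :
    ∫ t in Ioi 0, t * exp (-(a * t)) = 1 / a ^ 2 := by
  have h := integral_rpow_mul_exp_neg_mul_Ioi two_pos ha
  norm_num at h
  simpa using h

lemma integrableOn_mul_exp_neg_mul_Ioi_zero (ha : 0 < a) :
    IntegrableOn (fun t => t * exp (-(a * t))) (Ioi 0) := by
  apply Integrable.of_integral_ne_zero
  rw [integral_mul_exp_neg_mul_Ioi_zero ha]
  positivity

lemma abs_integral_exp_neg_mul_mul_sub_le {φ : ℝ → ℝ} {c K : ℝ} (ha : 0 < a)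
    (hφ : AEStronglyMeasurable φ (volume.restrict (Ioi 0)))
    (h : ∀ t > 0, |φ t - c| ≤ K * t) :
    |(∫ t in Ioi 0, exp (-(a * t)) * φ t) - c / a| ≤ K / a ^ 2 := by
  have key := norm_integral_sub_integral_le_of_norm_sub_le
    (μ := volume.restrict (Ioi (0 : ℝ))) (f := fun t => exp (-(a * t)) * φ t)
    (g := fun t => c * exp (-(a * t))) (b := fun t => K * (t * exp (-(a * t))))
    (Continuous.aestronglyMeasurable (by fun_prop) |>.mul hφ)
    ((integrableOn_exp_neg_mul_Ioi_zero ha).const_mul c)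
    ((integrableOn_mul_exp_neg_mul_Ioi_zero ha).const_mul K) (by
      filter_upwards [ae_restrict_mem measurableSet_Ioi] with t ht
      have hexp := exp_pos (-(a * t))
      calc ‖exp (-(a * t)) * φ t - c * exp (-(a * t))‖
          = |φ t - c| * exp (-(a * t)) := by
            rw [mul_comm, ← sub_mul, norm_mul, norm_eq_abs, norm_of_nonneg hexp.le]
        _ ≤ K * t * exp (-(a * t)) := by gcongr; exact h t ht
        _ = K * (t * exp (-(a * t))) := by ring)
  simpa only [integral_const_mul, integral_exp_neg_mul_Ioi_zero ha,
    integral_mul_exp_neg_mul_Ioi_zero ha, mul_one_div, norm_eq_abs] using key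

lemma integrable_exp_neg_mul_exp_neg_prod (ha : 0 < a) :
    Integrable (fun p : ℝ × ℝ => exp (-(a * p.1)) * exp (-(a * p.2)))
      ((volume.restrict (Ioi 0)).prod (volume.restrict (Ioi 0))) :=
  (integrableOn_exp_neg_mul_Ioi_zero ha).mul_prod (integrableOn_exp_neg_mul_Ioi_zero ha)

lemma integral_exp_neg_mul_exp_neg_prod (ha : 0 < a) :
    ∫ p : ℝ × ℝ, exp (-(a * p.1)) * exp (-(a * p.2))
      ∂((volume.restrict (Ioi 0)).prod (volume.restrict (Ioi 0))) = 1 / a ^ 2 := by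
  rw [integral_prod_mul (fun u => exp (-(a * u))) fun t => exp (-(a * t)),
    integral_exp_neg_mul_Ioi_zero ha]
  ring

end Laplace

section LogIntegrals

open Set

lemma hasDerivAt_Gamma_integral_log {s : ℝ} (hs : 0 < s) :
    HasDerivAt Gamma (∫ t in Ioi 0, t ^ (s - 1) * (log t * exp (-t))) s := by
  have h_complex : HasDerivAt Complex.Gamma
      ((∫ t in Ioi 0, t ^ (s - 1) * (log t * exp (-t)) : ℝ) : ℂ) (s : ℂ) := by
    have h := Complex.hasDerivAt_GammaIntegral (s := s) (by simpa using hs)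
    have h_cast : ∫ t : ℝ in Ioi 0, (t : ℂ) ^ ((s : ℂ) - 1) * (log t * exp (-t))
        = ((∫ t in Ioi 0, t ^ (s - 1) * (log t * exp (-t)) : ℝ) : ℂ) := by
      rw [← integral_complex_ofReal]
      refine setIntegral_congr_fun measurableSet_Ioi fun t ht => ?_
      simp [Complex.ofReal_cpow (le_of_lt ht)]
    rw [h_cast] at h
    refine h.congr_of_eventuallyEq ?_
    filter_upwards [(isOpen_lt continuous_const Complex.continuous_re).mem_nhds
      (show (0 : ℝ) < (s : ℂ).re by simpa using hs)] with z hz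
    exact Complex.Gamma_eq_integral hz
  simpa only [Complex.Gamma_ofReal, Complex.ofReal_re] using h_complex.real_of_complex

lemma integral_log_mul_exp_neg :
    ∫ t in Ioi 0, log t * exp (-t) = -eulerMascheroniConstant := by
  simpa using (hasDerivAt_Gamma_integral_log one_pos).unique hasDerivAt_Gamma_one

lemma integral_log_mul_exp_neg_sq :
    ∫ t in Ioi 0, log t * exp (-t ^ 2) = -(√π / 4) * (eulerMascheroniConstant + 2 * log 2) := by
  have h_half : ∫ t in Ioi 0, t ^ ((1 / 2 : ℝ) - 1) * (log t * exp (-t))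
      = -√π * (eulerMascheroniConstant + 2 * log 2) :=
    (hasDerivAt_Gamma_integral_log one_half_pos).unique hasDerivAt_Gamma_one_half
  rw [← integral_comp_rpow_Ioi_of_pos two_pos] at h_half
  have h_congr : ∫ t in Ioi 0, (2 * t ^ ((2 : ℝ) - 1)) •
        ((t ^ (2 : ℝ)) ^ ((1 / 2 : ℝ) - 1) * (log (t ^ (2 : ℝ)) * exp (-t ^ (2 : ℝ))))
      = ∫ t in Ioi 0, 4 * (log t * exp (-t ^ 2)) := by
    refine setIntegral_congr_fun measurableSet_Ioi fun t (ht : 0 < t) => ?_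
    have h_inv : (t ^ (2 : ℝ)) ^ ((1 / 2 : ℝ) - 1) = t⁻¹ := by
      rw [← rpow_mul ht.le, ← rpow_neg_one]
      norm_num
    rw [h_inv, log_rpow ht, rpow_two, show (2 : ℝ) - 1 = 1 by norm_num, rpow_one, smul_eq_mul]
    field_simp
    ring
  rw [h_congr, integral_const_mul] at h_half
  linarith

lemma integrableOn_log_mul_exp_neg : IntegrableOn (fun t => log t * exp (-t)) (Ioi 0) := by
  apply Integrable.of_integral_ne_zero
  rw [integral_log_mul_exp_neg]
  linarith [one_half_lt_eulerMascheroniConstant]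

lemma integrableOn_log_mul_exp_neg_sq :
    IntegrableOn (fun t => log t * exp (-t ^ 2)) (Ioi 0) := by
  apply Integrable.of_integral_ne_zero
  rw [integral_log_mul_exp_neg_sq]
  have hγ := one_half_lt_eulerMascheroniConstant
  have h_log : 0 < log 2 := log_pos one_lt_two
  exact mul_ne_zero (by simp [sqrt_eq_zero', pi_pos]) (by linarith)

variable {a : ℝ}

lemma eqOn_log_mul_exp_neg_mul (ha : 0 < a) :
    EqOn (fun t => log t * (a * exp (-(a * t))))
      (fun t => a * (log (a * t) * exp (-(a * t)) - log a * exp (-(a * t)))) (Ioi 0) := by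
  intro t (ht : 0 < t)
  simp only [log_mul ha.ne' ht.ne']
  ring

lemma integrableOn_log_mul_exp_neg_mul (ha : 0 < a) :
    IntegrableOn (fun t => log t * (a * exp (-(a * t)))) (Ioi 0) := by
  refine IntegrableOn.congr_fun (Integrable.const_mul ?_ a) (eqOn_log_mul_exp_neg_mul ha).symm
    measurableSet_Ioi
  refine (integrableOn_Ioi_comp_mul_left_iff
    (fun t => log t * exp (-t) - log a * exp (-t)) 0 ha).2 ?_
  rw [mul_zero]
  exact integrableOn_log_mul_exp_neg.sub ((integrableOn_exp_neg_Ioi 0).const_mul _)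

lemma integral_log_mul_exp_neg_mul (ha : 0 < a) :
    ∫ t in Ioi 0, log t * (a * exp (-(a * t))) = -eulerMascheroniConstant - log a := by
  rw [setIntegral_congr_fun measurableSet_Ioi (eqOn_log_mul_exp_neg_mul ha), integral_const_mul,
    integral_comp_mul_left_Ioi (fun t => log t * exp (-t) - log a * exp (-t)) 0 ha, mul_zero,
    smul_eq_mul, mul_inv_cancel_left₀ ha.ne',
    integral_sub integrableOn_log_mul_exp_neg ((integrableOn_exp_neg_Ioi 0).const_mul _),
    integral_const_mul, integral_exp_neg_Ioi_zero, integral_log_mul_exp_neg, mul_one]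

end LogIntegrals

section Erf

open Set Topology

lemma le_of_tendsto_atTop_of_hasDerivAt_nonneg {f f' : ℝ → ℝ} {c l : ℝ}
    (hf : ∀ x > c, HasDerivAt f (f' x) x) (hf' : ∀ x > c, 0 ≤ f' x)
    (hlim : Tendsto f atTop (𝓝 l)) {x : ℝ} (hx : c < x) : f x ≤ l := by
  have hmono : MonotoneOn f (Ioi c) := by
    refine monotoneOn_of_hasDerivWithinAt_nonneg (convex_Ioi c)
      (fun z hz => (hf z hz).continuousAt.continuousWithinAt)
      (fun z hz => (hf z (interior_subset hz)).hasDerivWithinAt)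
      (fun z hz => hf' z (interior_subset hz))
  refine ge_of_tendsto hlim ?_
  filter_upwards [eventually_ge_atTop x] with z hz
  exact hmono hx (hx.trans_le hz) hz

lemma one_le_sqrt_pi : 1 ≤ √π := one_le_sqrt.2 (by linarith [pi_gt_three])

lemma sqrt_pi_le_two : √π ≤ 2 := sqrt_le_iff.2 ⟨zero_le_two, by linarith [pi_lt_four]⟩

lemma hasDerivAt_erf (x : ℝ) : HasDerivAt erf (2 / √π * exp (-x ^ 2)) x := by
  have hc : Continuous fun t : ℝ => exp (-t ^ 2) := by fun_prop
  exact (hc.integral_hasStrictDerivAt 0 x).hasDerivAt.const_mul _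

@[fun_prop]
lemma continuous_erf : Continuous erf :=
  continuous_iff_continuousAt.2 fun x => (hasDerivAt_erf x).continuousAt

lemma erf_zero : erf 0 = 0 := by simp [erf]

lemma erf_neg (x : ℝ) : erf (-x) = -erf x := by
  have h := intervalIntegral.integral_comp_neg (a := 0) (b := x) fun t : ℝ => exp (-t ^ 2)
  simp only [neg_sq, neg_zero] at h
  rw [erf, erf, h, intervalIntegral.integral_symm, mul_neg]

lemma integrableOn_exp_neg_sq_Ioi : IntegrableOn (fun t : ℝ => exp (-t ^ 2)) (Ioi 0) := by
  simpa using (integrable_exp_neg_mul_sq one_pos).integrableOn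

lemma integral_exp_neg_sq_Ioi : ∫ t in Ioi (0 : ℝ), exp (-t ^ 2) = √π / 2 := by
  simpa using integral_gaussian_Ioi 1

lemma tendsto_erf_atTop : Tendsto erf atTop (𝓝 1) := by
  have h := (intervalIntegral_tendsto_integral_Ioi 0 integrableOn_exp_neg_sq_Ioi
    tendsto_id).const_mul (2 / √π)
  rwa [integral_exp_neg_sq_Ioi, div_mul_div_cancel₀ (by positivity), div_self two_ne_zero] at h

lemma hasDerivAt_erfc (x : ℝ) : HasDerivAt erfc (-(2 / √π * exp (-x ^ 2))) x :=
  (hasDerivAt_erf x).const_sub 1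

@[fun_prop]
lemma continuous_erfc : Continuous erfc := continuous_const.sub continuous_erf

lemma erfc_zero : erfc 0 = 1 := by simp [erfc, erf_zero]

lemma tendsto_erfc_atTop : Tendsto erfc atTop (𝓝 0) := by
  simpa only [sub_self, ← erfc.eq_def] using tendsto_erf_atTop.const_sub 1

lemma antitone_erfc : Antitone erfc :=
  antitone_of_hasDerivAt_nonpos hasDerivAt_erfc fun x => neg_nonpos.2 (by positivity)

lemma erfc_nonneg (x : ℝ) : 0 ≤ erfc x := antitone_erfc.le_of_tendsto tendsto_erfc_atTop x

variable {x : ℝ}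

lemma erfc_le_one (hx : 0 ≤ x) : erfc x ≤ 1 := erfc_zero ▸ antitone_erfc hx

lemma erf_nonneg (hx : 0 ≤ x) : 0 ≤ erf x := by
  simpa only [erfc, sub_le_self_iff] using erfc_le_one hx

lemma erf_le_two_mul (hx : 0 ≤ x) : erf x ≤ 2 * x := by
  have h_deriv (z : ℝ) : deriv erf z ≤ 2 := by
    rw [(hasDerivAt_erf z).deriv, div_mul_eq_mul_div]
    refine div_le_of_le_mul₀ (by positivity) zero_le_two ?_
    gcongr
    exact (exp_le_one_iff.2 (by simp [sq_nonneg])).trans one_le_sqrt_pi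
  simpa [erf_zero] using
    image_sub_le_mul_sub_of_deriv_le (fun z => (hasDerivAt_erf z).differentiableAt) h_deriv hx

/-- The scaled complementary error function `e^{x²} erfc x`, used for Mills-ratio bounds. -/
noncomputable def erfcx (x : ℝ) : ℝ := exp (x ^ 2) * erfc x

lemma erfc_eq_exp_neg_sq_mul_erfcx (x : ℝ) : erfc x = exp (-x ^ 2) * erfcx x := by
  rw [erfcx, ← mul_assoc, ← exp_add, neg_add_cancel, exp_zero, one_mul]

lemma hasDerivAt_erfcx (x : ℝ) : HasDerivAt erfcx (2 * x * erfcx x - 2 / √π) x := by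
  have h_exp : HasDerivAt (fun x : ℝ => exp (x ^ 2)) (exp (x ^ 2) * (2 * x)) x := by
    simpa using (hasDerivAt_pow 2 x).exp
  refine (h_exp.mul (hasDerivAt_erfc x)).congr_deriv ?_
  have h_cancel : exp (x ^ 2) * exp (-x ^ 2) = 1 := by rw [← exp_add, add_neg_cancel, exp_zero]
  rw [erfcx]
  linear_combination (-(2 / √π)) * h_cancel

@[fun_prop]
lemma continuous_erfcx : Continuous erfcx :=
  continuous_iff_continuousAt.2 fun x => (hasDerivAt_erfcx x).continuousAt

lemma erfcx_zero : erfcx 0 = 1 := by simp [erfcx, erfc_zero]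

lemma erfcx_nonneg (x : ℝ) : 0 ≤ erfcx x := mul_nonneg (exp_pos _).le (erfc_nonneg x)

section Mills

variable {r r' : ℝ → ℝ} {l : ℝ}

lemma hasDerivAt_exp_neg_sq_mul_sub_erfc (hr : HasDerivAt r (r' x) x) :
    HasDerivAt (fun x => exp (-x ^ 2) * r x - √π * erfc x)
      (exp (-x ^ 2) * (r' x + 2 - 2 * x * r x)) x := by
  have h_exp : HasDerivAt (fun x : ℝ => exp (-x ^ 2)) (exp (-x ^ 2) * -(2 * x)) x := by
    simpa using (hasDerivAt_pow 2 x).fun_neg.exp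
  refine ((h_exp.mul hr).sub ((hasDerivAt_erfc x).const_mul √π)).congr_deriv ?_
  field_simp
  ring

lemma tendsto_exp_neg_sq_mul_sub_erfc (hlim : Tendsto r atTop (𝓝 l)) :
    Tendsto (fun x => exp (-x ^ 2) * r x - √π * erfc x) atTop (𝓝 0) := by
  have h_exp : Tendsto (fun x : ℝ => exp (-x ^ 2)) atTop (𝓝 0) :=
    tendsto_exp_neg_atTop_nhds_zero.comp (tendsto_pow_atTop two_ne_zero)
  simpa using (h_exp.mul hlim).sub (tendsto_erfc_atTop.const_mul √π)

lemma exp_neg_sq_mul_sub_erfc (x ρ : ℝ) :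
    exp (-x ^ 2) * ρ - √π * erfc x = exp (-x ^ 2) * (ρ - √π * erfcx x) := by
  rw [erfc_eq_exp_neg_sq_mul_erfcx]
  ring

lemma sqrt_pi_mul_erfcx_le (hr : ∀ x > 0, HasDerivAt r (r' x) x)
    (hlim : Tendsto r atTop (𝓝 l)) (h : ∀ x > 0, r' x + 2 ≤ 2 * x * r x) (hx : 0 < x) :
    √π * erfcx x ≤ r x := by
  have key := le_of_tendsto_atTop_of_hasDerivAt_nonneg
    (fun z hz => (hasDerivAt_exp_neg_sq_mul_sub_erfc (hr z hz)).neg)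
    (fun z hz => by
      rw [← mul_neg]
      exact mul_nonneg (exp_pos _).le (by linarith [h z hz]))
    (tendsto_exp_neg_sq_mul_sub_erfc hlim).neg hx
  rw [neg_zero, Pi.neg_apply, exp_neg_sq_mul_sub_erfc, neg_nonpos,
    mul_nonneg_iff_of_pos_left (exp_pos _)] at key
  linarith

lemma le_sqrt_pi_mul_erfcx (hr : ∀ x > 0, HasDerivAt r (r' x) x)
    (hlim : Tendsto r atTop (𝓝 l)) (h : ∀ x > 0, 2 * x * r x ≤ r' x + 2) (hx : 0 < x) :
    r x ≤ √π * erfcx x := by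
  have key := le_of_tendsto_atTop_of_hasDerivAt_nonneg
    (fun z hz => hasDerivAt_exp_neg_sq_mul_sub_erfc (hr z hz))
    (fun z hz => mul_nonneg (exp_pos _).le (by linarith [h z hz]))
    (tendsto_exp_neg_sq_mul_sub_erfc hlim) hx
  rw [exp_neg_sq_mul_sub_erfc] at key
  linarith [nonpos_of_mul_nonpos_right key (exp_pos _)]

end Mills

-- This bound and the next are consecutive convergents of the continued fraction of `√π * erfcx x`.
lemma div_le_sqrt_pi_mul_erfcx (hx : 0 < x) : x / (x ^ 2 + 1 / 2) ≤ √π * erfcx x := by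
  refine le_sqrt_pi_mul_erfcx (r := fun x => x / (x ^ 2 + 1 / 2))
    (r' := fun x => (1 / 2 - x ^ 2) / (x ^ 2 + 1 / 2) ^ 2) (l := 0) (fun z hz => ?_) ?_
    (fun z hz => ?_) hx
  · refine ((hasDerivAt_id z).div ((hasDerivAt_pow 2 z).add_const _) (by positivity)).congr_deriv ?_
    simp only [id_eq]
    field_simp
    ring
  · refine squeeze_zero' ?_ ?_ tendsto_inv_atTop_zero
    all_goals filter_upwards [eventually_gt_atTop 0] with z hz
    · positivity
    · rw [inv_eq_one_div, div_le_div_iff₀ (by positivity) hz]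
      linarith
  · have h_gap : (1 / 2 - z ^ 2) / (z ^ 2 + 1 / 2) ^ 2 + 2 - 2 * z * (z / (z ^ 2 + 1 / 2))
        = 1 / (z ^ 2 + 1 / 2) ^ 2 := by
      field_simp
      ring
    have h_nonneg : 0 ≤ 1 / (z ^ 2 + 1 / 2) ^ 2 := by positivity
    linarith

lemma sqrt_pi_mul_erfcx_le_div (hx : 0 < x) :
    √π * erfcx x ≤ (x ^ 2 + 1) / (x * (x ^ 2 + 3 / 2)) := by
  refine sqrt_pi_mul_erfcx_le (r := fun x => (x ^ 2 + 1) / (x * (x ^ 2 + 3 / 2)))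
    (r' := fun x => (2 * x * (x * (x ^ 2 + 3 / 2)) - (x ^ 2 + 1) * (3 * x ^ 2 + 3 / 2))
      / (x * (x ^ 2 + 3 / 2)) ^ 2) (l := 0) (fun z hz => ?_) ?_ (fun z hz => ?_) hx
  · refine (((hasDerivAt_pow 2 z).add_const _).div
      ((hasDerivAt_id z).mul ((hasDerivAt_pow 2 z).add_const _))
      (mul_ne_zero hz.ne' (by positivity))).congr_deriv ?_
    simp only [id_eq, Pi.mul_apply]
    norm_num
    ring
  · refine squeeze_zero' ?_ ?_ tendsto_inv_atTop_zero
    all_goals filter_upwards [eventually_gt_atTop 0] with z hz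
    · positivity
    · rw [inv_eq_one_div, div_le_div_iff₀ (by positivity) hz]
      nlinarith
  · have h_gap : 2 * z * ((z ^ 2 + 1) / (z * (z ^ 2 + 3 / 2))) -
          ((2 * z * (z * (z ^ 2 + 3 / 2)) - (z ^ 2 + 1) * (3 * z ^ 2 + 3 / 2))
            / (z * (z ^ 2 + 3 / 2)) ^ 2 + 2)
        = 3 / 2 / (z * (z ^ 2 + 3 / 2)) ^ 2 := by
      field_simp
      ring
    have h_nonneg : 0 ≤ 3 / 2 / (z * (z ^ 2 + 3 / 2)) ^ 2 := by positivity
    linarith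

lemma mul_erfcx_le (hx : 0 ≤ x) : x * erfcx x ≤ 1 / √π := by
  rcases hx.eq_or_lt with rfl | hx
  · simp
  rw [le_div_iff₀ (by positivity)]
  calc x * erfcx x * √π = x * (√π * erfcx x) := by ring
    _ ≤ x * ((x ^ 2 + 1) / (x * (x ^ 2 + 3 / 2))) := by gcongr; exact sqrt_pi_mul_erfcx_le_div hx
    _ = (x ^ 2 + 1) / (x ^ 2 + 3 / 2) := by field_simp
    _ ≤ 1 := div_le_one_of_le₀ (by linarith) (by positivity)

lemma antitoneOn_erfcx : AntitoneOn erfcx (Ici 0) := by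
  refine antitoneOn_of_hasDerivWithinAt_nonpos (convex_Ici 0) continuous_erfcx.continuousOn
    (fun z _ => (hasDerivAt_erfcx z).hasDerivWithinAt) fun z hz => ?_
  have h := mul_erfcx_le (mem_Ici.1 (interior_subset hz))
  rw [show 2 / √π = 2 * (1 / √π) by ring]
  linarith

lemma erfcx_le_one (hx : 0 ≤ x) : erfcx x ≤ 1 :=
  erfcx_zero ▸ antitoneOn_erfcx self_mem_Ici hx hx

lemma abs_erfcx_sub_erfcx_le {y : ℝ} (hx : 0 ≤ x) (hy : 0 ≤ y) :
    |erfcx x - erfcx y| ≤ 2 / √π * |x - y| := by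
  refine (convex_Ici (0 : ℝ)).norm_image_sub_le_of_norm_hasDerivWithin_le
    (fun z _ => (hasDerivAt_erfcx z).hasDerivWithinAt) (fun z (hz : 0 ≤ z) => ?_) hy hx
  have h_le := mul_erfcx_le hz
  have h_nonneg := mul_nonneg hz (erfcx_nonneg z)
  rw [show 2 / √π = 2 * (1 / √π) by ring, norm_eq_abs, abs_le]
  constructor <;> linarith

lemma erfc_le_exp_neg_sq (hx : 0 ≤ x) : erfc x ≤ exp (-x ^ 2) := by
  rw [erfc_eq_exp_neg_sq_mul_erfcx]
  exact mul_le_of_le_one_right (exp_pos _).le (erfcx_le_one hx)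

lemma mul_erfc_le (hx : 0 ≤ x) : x * erfc x ≤ exp (-x ^ 2) / √π := by
  rw [erfc_eq_exp_neg_sq_mul_erfcx, mul_left_comm, ← mul_one_div]
  gcongr
  exact mul_erfcx_le hx

lemma integrableOn_erfc : IntegrableOn erfc (Ioi 0) := by
  refine integrableOn_exp_neg_sq_Ioi.mono' (by fun_prop) ?_
  filter_upwards [ae_restrict_mem measurableSet_Ioi] with t ht
  rw [norm_of_nonneg (erfc_nonneg t)]
  exact erfc_le_exp_neg_sq (le_of_lt ht)

lemma integral_erfc_le_one : ∫ t in Ioi 0, erfc t ≤ 1 := by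
  calc ∫ t in Ioi 0, erfc t ≤ ∫ t in Ioi 0, exp (-t ^ 2) :=
        setIntegral_mono_on integrableOn_erfc integrableOn_exp_neg_sq_Ioi measurableSet_Ioi
          fun t ht => erfc_le_exp_neg_sq (le_of_lt ht)
    _ = √π / 2 := integral_exp_neg_sq_Ioi
    _ ≤ 1 := by linarith [sqrt_pi_le_two]

end Erf

section ErfcLog

open Set Topology Asymptotics

variable {a u : ℝ}

lemma one_sub_exp_neg_nonneg (hu : 0 ≤ u) : 0 ≤ 1 - exp (-u) :=
  sub_nonneg.2 (exp_le_one_iff.2 (neg_nonpos.2 hu))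

lemma abs_erf_div_le (hu : 0 < u) : |erf u / u| ≤ 2 := by
  rw [abs_of_nonneg (div_nonneg (erf_nonneg hu.le) hu.le), div_le_iff₀ hu]
  exact erf_le_two_mul hu.le

lemma abs_erf_div_mul_exp_neg_le (a : ℝ) (hu : 0 < u) :
    |erf u / u * exp (-(a * u))| ≤ 2 * exp (-(a * u)) := by
  rw [abs_mul, abs_of_pos (exp_pos _)]
  gcongr
  exact abs_erf_div_le hu

lemma integrableOn_erf_div_mul_exp_neg (ha : 0 < a) :
    IntegrableOn (fun u => erf u / u * exp (-(a * u))) (Ioi 0) := by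
  refine ((integrableOn_exp_neg_mul_Ioi_zero ha).const_mul 2).mono'
    (Measurable.aestronglyMeasurable (by fun_prop)) ?_
  filter_upwards [ae_restrict_mem measurableSet_Ioi] with u hu
  exact abs_erf_div_mul_exp_neg_le a hu

lemma abs_integral_erf_div_mul_exp_neg_le (ha : 0 < a) :
    |∫ u in Ioi 0, erf u / u * exp (-(a * u))| ≤ 2 / a := by
  have h_bound : ∀ᵐ u ∂volume.restrict (Ioi 0),
      ‖erf u / u * exp (-(a * u))‖ ≤ 2 * exp (-(a * u)) := by
    filter_upwards [ae_restrict_mem measurableSet_Ioi] with u hu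
    exact abs_erf_div_mul_exp_neg_le a hu
  have h := norm_integral_le_of_norm_le ((integrableOn_exp_neg_mul_Ioi_zero ha).const_mul 2) h_bound
  rwa [integral_const_mul, integral_exp_neg_mul_Ioi_zero ha, mul_one_div] at h

lemma integrableOn_erfc_div_mul_one_sub_exp_neg (ha : 0 < a) :
    IntegrableOn (fun u => erfc u / u * (1 - exp (-(a * u)))) (Ioi 0) := by
  refine (integrableOn_erfc.const_mul a).mono' (Measurable.aestronglyMeasurable (by fun_prop)) ?_
  filter_upwards [ae_restrict_mem measurableSet_Ioi] with u (hu : 0 < u)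
  have h_erfc := erfc_nonneg u
  have h_exp := one_sub_exp_neg_nonneg (mul_pos ha hu).le
  rw [norm_of_nonneg (by positivity)]
  calc erfc u / u * (1 - exp (-(a * u))) ≤ erfc u / u * (a * u) := by
        gcongr
        exact one_sub_le_exp_neg (a * u) |> sub_le_comm.1
    _ = a * erfc u := by field_simp

lemma erfc_sub_exp_neg_mul_inv (a u : ℝ) :
    (erfc u - exp (-(a * u))) * u⁻¹ =
      erfc u / u * (1 - exp (-(a * u))) - erf u / u * exp (-(a * u)) := by
  rw [erfc]
  ring

lemma hasDerivAt_erfc_sub_exp_neg (a u : ℝ) :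
    HasDerivAt (fun u => erfc u - exp (-(a * u)))
      (a * exp (-(a * u)) - 2 / √π * exp (-u ^ 2)) u := by
  have h_exp : HasDerivAt (fun u => exp (-(a * u))) (exp (-(a * u)) * -(a * 1)) u :=
    ((hasDerivAt_id u).const_mul a).fun_neg.exp
  exact ((hasDerivAt_erfc u).sub h_exp).congr_deriv (by ring)

lemma erfc_sub_exp_neg_isBigO_inv (ha : 0 < a) :
    (fun u => erfc u - exp (-(a * u))) =O[atTop] fun u => u⁻¹ := by
  refine IsBigO.sub (IsBigO.of_bound 1 ?_) ?_
  · filter_upwards [eventually_gt_atTop 0] with u hu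
    rw [norm_of_nonneg (erfc_nonneg u), norm_of_nonneg (by positivity), one_mul,
      inv_eq_one_div, le_div_iff₀' hu]
    refine (mul_erfc_le hu.le).trans (div_le_one_of_le₀ ?_ (by positivity))
    exact (exp_le_one_iff.2 (by simp [sq_nonneg])).trans one_le_sqrt_pi
  · simpa [rpow_neg_one] using (isLittleO_exp_neg_mul_rpow_atTop ha (-1)).isBigO

lemma integral_erfc_sub_exp_neg_mul_inv (ha : 0 < a) :
    ∫ u in Ioi 0, (erfc u - exp (-(a * u))) * u⁻¹
      = log a + eulerMascheroniConstant / 2 - log 2 := by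
  have h_split (u : ℝ) : (a * exp (-(a * u)) - 2 / √π * exp (-u ^ 2)) * log u
      = log u * (a * exp (-(a * u))) - 2 / √π * (log u * exp (-u ^ 2)) := by ring
  have h_int := (integrableOn_erfc_div_mul_one_sub_exp_neg ha).sub
    (integrableOn_erf_div_mul_exp_neg ha)
  have h_int_log := integrableOn_log_mul_exp_neg_sq.const_mul (2 / √π)
  rw [integral_mul_inv_eq_neg_integral_deriv_mul_log
      (fun u _ => hasDerivAt_erfc_sub_exp_neg a u) (by simp [erfc_zero])
      (erfc_sub_exp_neg_isBigO_inv ha) (by simp only [erfc_sub_exp_neg_mul_inv]; exact h_int)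
      (by simp only [h_split]; exact (integrableOn_log_mul_exp_neg_mul ha).sub h_int_log)]
  simp only [h_split]
  rw [integral_sub (integrableOn_log_mul_exp_neg_mul ha) h_int_log,
    integral_const_mul, integral_log_mul_exp_neg_mul ha, integral_log_mul_exp_neg_sq]
  field_simp
  ring

lemma abs_integral_erfc_div_mul_one_sub_exp_neg_sub_le (ha : 0 < a) :
    |(∫ u in Ioi 0, erfc u / u * (1 - exp (-(a * u))))
      - (log a + eulerMascheroniConstant / 2 - log 2)| ≤ 2 / a := by
  have h_eq := integral_sub (integrableOn_erfc_div_mul_one_sub_exp_neg ha)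
    (integrableOn_erf_div_mul_exp_neg ha)
  simp only [← erfc_sub_exp_neg_mul_inv, integral_erfc_sub_exp_neg_mul_inv ha] at h_eq
  rw [h_eq, sub_sub_cancel]
  exact abs_integral_erf_div_mul_exp_neg_le ha

end ErfcLog

section TiltedGaussian

open Set

/-- The Gaussian `e^{-2(t+s)²}` normalised to be `1` at `t = 0`. -/
noncomputable def tiltedGaussian (s t : ℝ) : ℝ := exp (-(4 * s * t)) * exp (-(2 * t ^ 2))

variable {s t u : ℝ}

@[fun_prop]
lemma continuous_tiltedGaussian (s : ℝ) : Continuous (tiltedGaussian s) := by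
  unfold tiltedGaussian
  fun_prop

lemma tiltedGaussian_pos (s t : ℝ) : 0 < tiltedGaussian s t := by
  unfold tiltedGaussian
  positivity

lemma exp_neg_two_mul_sub_neg_sq (s t : ℝ) :
    exp (-2 * (t - -s) ^ 2) = exp (-(2 * s ^ 2)) * tiltedGaussian s t := by
  rw [tiltedGaussian, ← exp_add, ← exp_add]
  ring_nf

lemma tiltedGaussian_le_exp_neg (s t : ℝ) : tiltedGaussian s t ≤ exp (-(4 * s * t)) :=
  mul_le_of_le_one_right (exp_pos _).le (exp_le_one_iff.2 (by simp [sq_nonneg]))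

lemma tiltedGaussian_le_one (hs : 0 ≤ s) (ht : 0 ≤ t) : tiltedGaussian s t ≤ 1 :=
  (tiltedGaussian_le_exp_neg s t).trans (exp_le_one_iff.2 (neg_nonpos.2 (by positivity)))

lemma tiltedGaussian_add_le (hs : 0 ≤ s) (ht : 0 ≤ t) (hu : 0 ≤ u) :
    tiltedGaussian s (t + u) ≤ tiltedGaussian s t := by
  unfold tiltedGaussian
  gcongr <;> linarith

lemma integrableOn_tiltedGaussian (hs : 0 < s) : IntegrableOn (tiltedGaussian s) (Ioi 0) := by
  refine (integrableOn_exp_neg_mul_Ioi_zero (a := 4 * s) (by positivity)).mono' (by fun_prop) ?_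
  filter_upwards with t
  rw [norm_of_nonneg (tiltedGaussian_pos s t).le]
  exact tiltedGaussian_le_exp_neg s t

lemma abs_tiltedGaussian_sub_exp_neg_mul_le (hs : 0 < s) (ht : 0 ≤ t) :
    |tiltedGaussian s t - exp (-(4 * s * t))| ≤ 4 / (4 * s) ^ 2 := by
  have h_exp := quadratic_le_exp_of_nonneg (x := 4 * s * t) (by positivity)
  have h_decay : (4 * s * t) ^ 2 * exp (-(4 * s * t)) ≤ 2 := by
    rw [exp_neg, ← div_eq_mul_inv, div_le_iff₀ (exp_pos _)]
    nlinarith [mul_nonneg hs.le ht]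
  have h_gauss := one_sub_le_exp_neg (2 * t ^ 2)
  rw [abs_sub_comm, abs_of_nonneg (sub_nonneg.2 (tiltedGaussian_le_exp_neg s t)), tiltedGaussian,
    le_div_iff₀ (by positivity)]
  calc (exp (-(4 * s * t)) - exp (-(4 * s * t)) * exp (-(2 * t ^ 2))) * (4 * s) ^ 2
      = exp (-(4 * s * t)) * (1 - exp (-(2 * t ^ 2))) * (4 * s) ^ 2 := by ring
    _ ≤ exp (-(4 * s * t)) * (2 * t ^ 2) * (4 * s) ^ 2 := by gcongr; linarith
    _ = 2 * ((4 * s * t) ^ 2 * exp (-(4 * s * t))) := by ring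
    _ ≤ 4 := by linarith

lemma abs_integral_tiltedGaussian_sub_le (hs : 0 < s) (hu : 0 ≤ u) :
    |(∫ t in (0)..u, tiltedGaussian s t) - (1 - exp (-(4 * s * u))) / (4 * s)|
      ≤ 4 / (4 * s) ^ 2 * u := by
  have h_exp : ∫ t in (0)..u, exp (-(4 * s * t)) = (1 - exp (-(4 * s * u))) / (4 * s) := by
    have h := intervalIntegral.integral_comp_mul_left exp (c := -(4 * s)) (by linarith)
      (a := 0) (b := u)
    rw [integral_exp] at h
    simp only [neg_mul, mul_zero, exp_zero, smul_eq_mul] at h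
    rw [h]
    field_simp
    ring
  rw [← h_exp, ← intervalIntegral.integral_sub (Continuous.intervalIntegrable (by fun_prop) _ _)
    (Continuous.intervalIntegrable (by fun_prop) _ _)]
  simpa [abs_of_nonneg hu] using intervalIntegral.norm_integral_le_of_norm_le_const
    (f := fun t => tiltedGaussian s t - exp (-(4 * s * t))) (a := 0) (b := u) fun t ht =>
      abs_tiltedGaussian_sub_exp_neg_mul_le hs (uIoc_of_le hu ▸ ht).1.le

end TiltedGaussian

section FirstThreeTerms

open Set

/-- The factor `√(2π) e^{2s²}` by which `A (-s)` is rescaled to order `s`. -/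
noncomputable def rescaling (s : ℝ) : ℝ := √(2 * π) * exp (2 * s ^ 2)

variable {s t : ℝ}

lemma rescaling_pos (s : ℝ) : 0 < rescaling s := by
  unfold rescaling
  positivity

lemma rescaling_mul_exp_neg (s : ℝ) : rescaling s * exp (-(2 * s ^ 2)) = √(2 * π) := by
  rw [rescaling, mul_assoc, ← exp_add, add_neg_cancel, exp_zero, mul_one]

lemma rescaling_mul_integral_gaussian_mul (s : ℝ) (φ : ℝ → ℝ) :
    rescaling s * ∫ t in Ioi 0, exp (-2 * (t - -s) ^ 2) * φ t =
      √(2 * π) * ∫ t in Ioi 0, exp (-(4 * s * t)) * (exp (-(2 * t ^ 2)) * φ t) := by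
  rw [← rescaling_mul_exp_neg s, mul_assoc, ← integral_const_mul (exp _)]
  congr! 3
  rw [exp_neg_two_mul_sub_neg_sq, tiltedGaussian]
  ring

lemma abs_exp_neg_mul_erfc_sub_one_le (ht : 0 ≤ t) :
    |exp (-(2 * t ^ 2)) * erfc t - 1| ≤ 4 * t := by
  have h_exp_le : exp (-(2 * t ^ 2)) ≤ 1 := exp_le_one_iff.2 (by simp [sq_nonneg])
  have h_prod_nonneg := mul_nonneg (exp_pos (-(2 * t ^ 2))).le (erfc_nonneg t)
  have h_prod_le : exp (-(2 * t ^ 2)) * erfc t ≤ 1 :=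
    mul_le_one₀ h_exp_le (erfc_nonneg t) (erfc_le_one ht)
  rw [abs_sub_comm, abs_of_nonneg (sub_nonneg.2 h_prod_le)]
  rcases le_total t 1 with ht_one | ht_one
  · have h_exp := one_sub_le_exp_neg (2 * t ^ 2)
    have h_erf := erf_le_two_mul ht
    have h_erf_nonneg := erf_nonneg ht
    rw [erfc]
    nlinarith
  · linarith

lemma abs_rescaling_mul_A₁_add_le (hs : 0 < s) :
    |rescaling s * A₁ (-s) + 1 / (8 * s)| ≤ 1 / (8 * s ^ 2) := by
  set I := ∫ t in Ioi 0, exp (-(4 * s * t)) * (exp (-(2 * t ^ 2)) * erfc t) with hI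
  have h_eq : rescaling s * A₁ (-s) = -(1 / 2) * I := by
    rw [A₁, mul_left_comm, rescaling_mul_integral_gaussian_mul, ← hI]
    field_simp
  have h_laplace : |I - 1 / (4 * s)| ≤ 4 / (4 * s) ^ 2 :=
    abs_integral_exp_neg_mul_mul_sub_le (by positivity)
      (Continuous.aestronglyMeasurable (by fun_prop)) fun t ht =>
        abs_exp_neg_mul_erfc_sub_one_le (le_of_lt ht)
  calc |rescaling s * A₁ (-s) + 1 / (8 * s)| = |-(1 / 2) * (I - 1 / (4 * s))| := by
        rw [h_eq]
        congr 1
        ring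
    _ = 1 / 2 * |I - 1 / (4 * s)| := by rw [abs_mul]; norm_num
    _ ≤ 1 / 2 * (4 / (4 * s) ^ 2) := by gcongr
    _ = 1 / (8 * s ^ 2) := by ring

lemma abs_exp_neg_mul_mul_sub_erfc_le (ht : 0 ≤ t) :
    |exp (-(2 * t ^ 2)) * (t * (exp (-t ^ 2) / √π - t * erfc t))| ≤ t := by
  have h_nonneg : 0 ≤ exp (-t ^ 2) / √π - t * erfc t := sub_nonneg.2 (mul_erfc_le ht)
  have h_gauss : exp (-t ^ 2) / √π ≤ 1 := div_le_one_of_le₀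
    ((exp_le_one_iff.2 (by simp [sq_nonneg])).trans one_le_sqrt_pi) (by positivity)
  have h_erfc := mul_nonneg ht (erfc_nonneg t)
  rw [abs_of_nonneg (by positivity)]
  calc exp (-(2 * t ^ 2)) * (t * (exp (-t ^ 2) / √π - t * erfc t)) ≤ 1 * (t * 1) := by
        gcongr
        · exact exp_le_one_iff.2 (by simp [sq_nonneg])
        · linarith
    _ = t := by ring

lemma abs_rescaling_mul_A₂_le (hs : 0 < s) :
    |rescaling s * A₂ (-s)| ≤ 1 / (16 * s ^ 2) := by
  set I := ∫ t in Ioi 0,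
    exp (-(4 * s * t)) * (exp (-(2 * t ^ 2)) * (t * (exp (-t ^ 2) / √π - t * erfc t))) with hI
  have h_eq : rescaling s * A₂ (-s) = I := by
    simp only [A₂, mul_assoc]
    rw [mul_left_comm, rescaling_mul_integral_gaussian_mul, ← hI]
    field_simp
  have h_laplace : |I - 0 / (4 * s)| ≤ 1 / (4 * s) ^ 2 :=
    abs_integral_exp_neg_mul_mul_sub_le (by positivity)
      (Continuous.aestronglyMeasurable (by fun_prop)) fun t ht => by
        simpa using abs_exp_neg_mul_mul_sub_erfc_le (le_of_lt ht)
  rw [h_eq]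
  calc |I| ≤ 1 / (4 * s) ^ 2 := by simpa using h_laplace
    _ = 1 / (16 * s ^ 2) := by ring

/-- The amount by which `√(2π) erfcx (√2 s) (s² + 1/4) / 2`, which approximates
`rescaling s * A₃ (-s)`, exceeds its own leading term `s / 2`. -/
noncomputable def millsExcess (s : ℝ) : ℝ :=
  √(2 * π) * erfcx (√2 * s) * (s ^ 2 + 1 / 4) / 2 - s / 2

lemma millsExcess_nonneg (hs : 0 < s) : 0 ≤ millsExcess s := by
  have h := div_le_sqrt_pi_mul_erfcx (x := √2 * s) (by positivity)
  have h_sqrt : √2 ^ 2 = 2 := sq_sqrt zero_le_two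
  have h_lower : s / (s ^ 2 + 1 / 4) ≤ √(2 * π) * erfcx (√2 * s) := by
    rw [sqrt_mul zero_le_two, mul_assoc]
    calc s / (s ^ 2 + 1 / 4) = √2 * (√2 * s / ((√2 * s) ^ 2 + 1 / 2)) := by
          rw [mul_pow, h_sqrt]
          field_simp
          linear_combination (-2 - 8 * s ^ 2) * h_sqrt
      _ ≤ √2 * (√π * erfcx (√2 * s)) := by gcongr
  rw [div_le_iff₀ (by positivity)] at h_lower
  rw [millsExcess]
  linarith

lemma millsExcess_le (hs : 0 < s) : millsExcess s ≤ 1 / (16 * s ^ 2) := by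
  have h := sqrt_pi_mul_erfcx_le_div (x := √2 * s) (by positivity)
  have h_sqrt : √2 ^ 2 = 2 := sq_sqrt zero_le_two
  have h_upper : √(2 * π) * erfcx (√2 * s) ≤ (s ^ 2 + 1 / 2) / (s * (s ^ 2 + 3 / 4)) := by
    rw [sqrt_mul zero_le_two, mul_assoc]
    calc √2 * (√π * erfcx (√2 * s))
        ≤ √2 * (((√2 * s) ^ 2 + 1) / (√2 * s * ((√2 * s) ^ 2 + 3 / 2))) := by gcongr
      _ = (s ^ 2 + 1 / 2) / (s * (s ^ 2 + 3 / 4)) := by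
          rw [mul_pow, h_sqrt]
          field_simp
          ring
  calc millsExcess s
      ≤ (s ^ 2 + 1 / 2) / (s * (s ^ 2 + 3 / 4)) * (s ^ 2 + 1 / 4) / 2 - s / 2 := by
        rw [millsExcess]
        gcongr
    _ = 1 / (16 * (s * (s ^ 2 + 3 / 4))) := by
        field_simp
        ring
    _ ≤ 1 / (16 * s ^ 2) := by
        rw [sq s]
        gcongr
        nlinarith [sq_nonneg (s - 1 / 2)]

lemma rescaling_mul_A₃_sub (s : ℝ) :
    rescaling s * A₃ (-s) - s / 2 = millsExcess s * (1 - erfc (√2 * s) / 2) := by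
  have h_erf : erf (√2 * -s) = erfc (√2 * s) - 1 := by
    rw [mul_neg, erf_neg, erfc]
    ring
  have h_exp : exp (-2 * (-s) ^ 2) = exp (-(2 * s ^ 2)) := by ring_nf
  have h_erfc : erfc (√2 * s) = exp (-(2 * s ^ 2)) * erfcx (√2 * s) := by
    rw [erfc_eq_exp_neg_sq_mul_erfcx, mul_pow, sq_sqrt zero_le_two]
  have h_ne := (rescaling_pos s).ne'
  rw [A₃, h_erf, h_exp, millsExcess, ← rescaling_mul_exp_neg s, h_erfc]
  field_simp
  ring

lemma abs_rescaling_mul_A₃_sub_le (hs : 0 < s) :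
    |rescaling s * A₃ (-s) - s / 2| ≤ 1 / (16 * s ^ 2) := by
  have h_nonneg := erfc_nonneg (√2 * s)
  have h_le := erfc_le_one (x := √2 * s) (by positivity)
  rw [rescaling_mul_A₃_sub, abs_of_nonneg (mul_nonneg (millsExcess_nonneg hs) (by linarith))]
  exact (mul_le_of_le_one_right (millsExcess_nonneg hs) (by linarith)).trans (millsExcess_le hs)

end FirstThreeTerms

section FourthTerm

open Set

/-- The integrand of `A₄ (-s)` divided by `e^{-2s²}`, in the coordinates `u = t₁ - t₂`, `t = t₂`. -/
noncomputable def kernel (s u t : ℝ) : ℝ :=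
  1 / u * (tiltedGaussian s (t + u) * (erf u + erf (√2 * (t + s))) +
    tiltedGaussian s t * (erf u - erf (√2 * (t + u + s))))

/-- The part of `-kernel s` that dominates `A₄ (-s)` for large `s`. -/
noncomputable def mainKernel (s u t : ℝ) : ℝ :=
  erfc u / u * (tiltedGaussian s t - tiltedGaussian s (t + u))

local notation "μ₊" => Measure.restrict volume (Ioi (0 : ℝ))

variable {s t u : ℝ}

lemma rescaling_mul_A₄ (s : ℝ) :
    rescaling s * A₄ (-s)
      = -∫ t₁ in Ioi 0, ∫ t₂ in Ioo 0 t₁, kernel s (t₁ - t₂) t₂ := by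
  have h_integrand (t₁ t₂ : ℝ) :
      1 / (t₁ - t₂) * (exp (-2 * (t₁ - -s) ^ 2) * (erf (t₁ - t₂) + erf (√2 * (t₂ - -s))) +
        exp (-2 * (t₂ - -s) ^ 2) * (erf (t₁ - t₂) - erf (√2 * (t₁ - -s))))
      = exp (-(2 * s ^ 2)) * kernel s (t₁ - t₂) t₂ := by
    rw [exp_neg_two_mul_sub_neg_sq, exp_neg_two_mul_sub_neg_sq, kernel, add_sub_cancel,
      sub_neg_eq_add, sub_neg_eq_add]
    ring
  simp only [A₄, h_integrand, integral_const_mul]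
  rw [mul_left_comm, ← mul_assoc (rescaling s), rescaling_mul_exp_neg]
  field_simp

lemma erfc_sqrt_two_mul_add (s t : ℝ) :
    erfc (√2 * (t + s)) = exp (-(2 * s ^ 2)) * tiltedGaussian s t * erfcx (√2 * (t + s)) := by
  rw [erfc_eq_exp_neg_sq_mul_erfcx, ← exp_neg_two_mul_sub_neg_sq, mul_pow, sq_sqrt zero_le_two,
    sub_neg_eq_add, neg_mul]

lemma kernel_add_mainKernel (s u t : ℝ) :
    kernel s u t + mainKernel s u t =
      tiltedGaussian s (t + u) * (2 * (erf u / u) +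
        exp (-(2 * s ^ 2)) * tiltedGaussian s t *
          ((erfcx (√2 * (t + u + s)) - erfcx (√2 * (t + s))) / u)) := by
  have h_erf (x : ℝ) : erf x = 1 - erfc x := by rw [erfc, sub_sub_cancel]
  rw [kernel, mainKernel, h_erf (√2 * (t + s)), h_erf (√2 * (t + u + s)), erfc_sqrt_two_mul_add,
    erfc_sqrt_two_mul_add, erfc]
  ring

lemma abs_erfcx_sqrt_two_mul_sub_div_le (hs : 0 ≤ s) (ht : 0 ≤ t) (hu : 0 < u) :
    |(erfcx (√2 * (t + u + s)) - erfcx (√2 * (t + s))) / u| ≤ 2 := by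
  have h_sqrt : √2 ≤ √π := sqrt_le_sqrt (by linarith [pi_gt_three])
  rw [abs_div, abs_of_pos hu, div_le_iff₀ hu]
  calc |erfcx (√2 * (t + u + s)) - erfcx (√2 * (t + s))|
      ≤ 2 / √π * |√2 * (t + u + s) - √2 * (t + s)| :=
        abs_erfcx_sub_erfcx_le (by positivity) (by positivity)
    _ = 2 / √π * (√2 * u) := by
        rw [← mul_sub, add_sub_add_right_eq_sub, add_sub_cancel_left, abs_of_nonneg (by positivity)]
    _ ≤ 2 / √π * (√π * u) := by gcongr
    _ = 2 * u := by field_simp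

lemma abs_kernel_add_mainKernel_le (hs : 0 ≤ s) (ht : 0 ≤ t) (hu : 0 < u) :
    |kernel s u t + mainKernel s u t| ≤ 6 * (exp (-(4 * s * u)) * exp (-(4 * s * t))) := by
  have h_exp : exp (-(2 * s ^ 2)) ≤ 1 := exp_le_one_iff.2 (by simp [sq_nonneg])
  have h_gauss_pos := tiltedGaussian_pos s
  have h_gauss := tiltedGaussian_le_one hs ht
  have h_erf := abs_erf_div_le hu
  have h_erfcx := abs_erfcx_sqrt_two_mul_sub_div_le hs ht hu
  set d := (erfcx (√2 * (t + u + s)) - erfcx (√2 * (t + s))) / u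
  have h_bracket :
      |2 * (erf u / u) + exp (-(2 * s ^ 2)) * tiltedGaussian s t * d| ≤ 2 * 2 + 1 * 1 * 2 := by
    refine (abs_add_le _ _).trans ?_
    rw [abs_mul, abs_mul _ d, abs_of_pos two_pos,
      abs_of_pos (mul_pos (exp_pos _) (h_gauss_pos t))]
    gcongr
    exact (h_gauss_pos t).le
  calc |kernel s u t + mainKernel s u t|
      = tiltedGaussian s (t + u) *
          |2 * (erf u / u) + exp (-(2 * s ^ 2)) * tiltedGaussian s t * d| := by
        rw [kernel_add_mainKernel, abs_mul, abs_of_pos (h_gauss_pos _)]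
    _ ≤ exp (-(4 * s * (t + u))) * (2 * 2 + 1 * 1 * 2) := by
        gcongr
        exact tiltedGaussian_le_exp_neg s (t + u)
    _ = 6 * (exp (-(4 * s * u)) * exp (-(4 * s * t))) := by
        rw [← exp_add]
        ring_nf

lemma integral_mainKernel (hs : 0 < s) (hu : 0 ≤ u) :
    ∫ t in Ioi 0, mainKernel s u t = erfc u / u * ∫ t in (0)..u, tiltedGaussian s t := by
  simp only [mainKernel]
  rw [integral_const_mul, integral_Ioi_sub_comp_add_right (integrableOn_tiltedGaussian hs) hu,
    zero_add]

lemma mainKernel_nonneg (hs : 0 ≤ s) (ht : 0 ≤ t) (hu : 0 ≤ u) : 0 ≤ mainKernel s u t :=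
  mul_nonneg (div_nonneg (erfc_nonneg u) hu) (sub_nonneg.2 (tiltedGaussian_add_le hs ht hu))

lemma integrableOn_mainKernel (hs : 0 < s) (hu : 0 ≤ u) :
    IntegrableOn (mainKernel s u) (Ioi 0) := by
  have h_shift : IntegrableOn (fun t => tiltedGaussian s (t + u)) (Ioi 0) :=
    integrableOn_Ioi_comp_add_right_iff.2
      ((integrableOn_tiltedGaussian hs).mono_set (Ioi_subset_Ioi (by simpa using hu)))
  exact ((integrableOn_tiltedGaussian hs).sub h_shift).const_mul _

lemma integrableOn_erfc_div_mul_integral_tiltedGaussian (hs : 0 < s) :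
    IntegrableOn (fun u => erfc u / u * ∫ t in (0)..u, tiltedGaussian s t) (Ioi 0) := by
  have h_cont : Continuous fun u => ∫ t in (0)..u, tiltedGaussian s t :=
    intervalIntegral.continuous_primitive
      (fun _ _ => (continuous_tiltedGaussian s).intervalIntegrable _ _) 0
  refine integrableOn_erfc.mono' ((continuous_erfc.measurable.div measurable_id).mul
    h_cont.measurable).aestronglyMeasurable ?_
  filter_upwards [ae_restrict_mem measurableSet_Ioi] with u (hu : 0 < u)
  have h_integral : |∫ t in (0)..u, tiltedGaussian s t| ≤ u := by
    simpa [abs_of_pos hu] using intervalIntegral.norm_integral_le_of_norm_le_const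
      (f := tiltedGaussian s) (a := 0) (b := u) (C := 1) fun t ht => by
        rw [norm_of_nonneg (tiltedGaussian_pos s t).le]
        exact tiltedGaussian_le_one hs.le (uIoc_of_le hu.le ▸ ht).1.le
  rw [norm_mul, norm_of_nonneg (div_nonneg (erfc_nonneg u) hu.le)]
  calc erfc u / u * ‖∫ t in (0)..u, tiltedGaussian s t‖ ≤ erfc u / u * u :=
        mul_le_mul_of_nonneg_left h_integral (div_nonneg (erfc_nonneg u) hu.le)
    _ = erfc u := by field_simp

lemma integrable_mainKernel_prod (hs : 0 < s) :
    Integrable (fun p : ℝ × ℝ => mainKernel s p.1 p.2) (μ₊.prod μ₊) := by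
  have h_meas : Measurable fun p : ℝ × ℝ => mainKernel s p.1 p.2 := by
    unfold mainKernel
    fun_prop
  refine (integrable_prod_iff h_meas.aestronglyMeasurable).2 ⟨?_, ?_⟩
  · filter_upwards [ae_restrict_mem measurableSet_Ioi] with u hu
    exact integrableOn_mainKernel hs (le_of_lt hu)
  · refine (integrableOn_erfc_div_mul_integral_tiltedGaussian hs).congr_fun (fun u hu => ?_)
      measurableSet_Ioi
    refine (integral_mainKernel hs (le_of_lt hu)).symm.trans ?_
    exact setIntegral_congr_fun measurableSet_Ioi fun t ht =>
      (norm_of_nonneg (mainKernel_nonneg hs.le (le_of_lt ht) (le_of_lt hu))).symm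

lemma measurable_kernel (s : ℝ) : Measurable fun p : ℝ × ℝ => kernel s p.1 p.2 := by
  unfold kernel
  fun_prop

lemma ae_prod_norm_kernel_sub_le (hs : 0 ≤ s) :
    ∀ᵐ p ∂(μ₊.prod μ₊), ‖kernel s p.1 p.2 - -mainKernel s p.1 p.2‖
      ≤ 6 * (exp (-(4 * s * p.1)) * exp (-(4 * s * p.2))) := by
  rw [Measure.prod_restrict]
  filter_upwards [ae_restrict_mem (measurableSet_Ioi.prod measurableSet_Ioi)] with p hp
  rw [sub_neg_eq_add]
  exact abs_kernel_add_mainKernel_le hs (le_of_lt hp.2) hp.1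

lemma integrable_kernel_prod (hs : 0 < s) :
    Integrable (fun p : ℝ × ℝ => kernel s p.1 p.2) (μ₊.prod μ₊) := by
  refine integrable_of_norm_sub_le (measurable_kernel s).aestronglyMeasurable
    (integrable_mainKernel_prod hs).neg
    ((integrable_exp_neg_mul_exp_neg_prod (a := 4 * s) (by positivity)).const_mul 6) ?_
  simpa only [norm_sub_rev, Pi.neg_apply] using ae_prod_norm_kernel_sub_le hs.le

lemma integral_kernel_eq_integral_prod (hs : 0 < s) :
    ∫ t₁ in Ioi 0, ∫ t₂ in Ioo 0 t₁, kernel s (t₁ - t₂) t₂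
      = ∫ p, kernel s p.1 p.2 ∂(μ₊.prod μ₊) := by
  rw [integral_prod _ (integrable_kernel_prod hs),
    integral_Ioi_integral_Ioo_eq_integral_integral_add]
  · simp only [add_sub_cancel_left]
  · simpa only [add_sub_cancel_left] using integrable_kernel_prod hs

lemma integral_mainKernel_prod (hs : 0 < s) :
    ∫ p, mainKernel s p.1 p.2 ∂(μ₊.prod μ₊)
      = ∫ u in Ioi 0, erfc u / u * ∫ t in (0)..u, tiltedGaussian s t := by
  rw [integral_prod _ (integrable_mainKernel_prod hs)]
  exact setIntegral_congr_fun measurableSet_Ioi fun u hu => integral_mainKernel hs (le_of_lt hu)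

lemma abs_rescaling_mul_A₄_sub_integral_le (hs : 0 < s) :
    |rescaling s * A₄ (-s) - ∫ u in Ioi 0, erfc u / u * ∫ t in (0)..u, tiltedGaussian s t|
      ≤ 6 / (4 * s) ^ 2 := by
  have h := norm_integral_sub_integral_le_of_norm_sub_le
    (measurable_kernel s).aestronglyMeasurable (integrable_mainKernel_prod hs).neg
    ((integrable_exp_neg_mul_exp_neg_prod (a := 4 * s) (by positivity)).const_mul 6)
    (ae_prod_norm_kernel_sub_le hs.le)
  rw [integral_const_mul, integral_exp_neg_mul_exp_neg_prod (by positivity), mul_one_div] at h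
  rw [rescaling_mul_A₄, integral_kernel_eq_integral_prod hs, ← integral_mainKernel_prod hs,
    ← abs_neg]
  simpa [integral_neg, add_comm] using h

lemma abs_integral_erfc_div_mul_integral_tiltedGaussian_sub_le (hs : 0 < s) :
    |(∫ u in Ioi 0, erfc u / u * ∫ t in (0)..u, tiltedGaussian s t)
        - (∫ u in Ioi 0, erfc u / u * (1 - exp (-(4 * s * u)))) / (4 * s)| ≤ 4 / (4 * s) ^ 2 := by
  have h_pointwise : ∀ᵐ u ∂μ₊, ‖(erfc u / u * ∫ t in (0)..u, tiltedGaussian s t)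
      - erfc u / u * (1 - exp (-(4 * s * u))) / (4 * s)‖ ≤ 4 / (4 * s) ^ 2 * erfc u := by
    filter_upwards [ae_restrict_mem measurableSet_Ioi] with u (hu : 0 < u)
    rw [mul_div_assoc, ← mul_sub, norm_mul, norm_of_nonneg (div_nonneg (erfc_nonneg u) hu.le)]
    calc erfc u / u * ‖(∫ t in (0)..u, tiltedGaussian s t) - (1 - exp (-(4 * s * u))) / (4 * s)‖
        ≤ erfc u / u * (4 / (4 * s) ^ 2 * u) :=
          mul_le_mul_of_nonneg_left (abs_integral_tiltedGaussian_sub_le hs hu.le)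
            (div_nonneg (erfc_nonneg u) hu.le)
      _ = 4 / (4 * s) ^ 2 * erfc u := by field_simp
  have h := norm_integral_sub_integral_le_of_norm_sub_le
    (integrableOn_erfc_div_mul_integral_tiltedGaussian hs).aestronglyMeasurable
    ((integrableOn_erfc_div_mul_one_sub_exp_neg (a := 4 * s) (by positivity)).div_const (4 * s))
    (integrableOn_erfc.const_mul (4 / (4 * s) ^ 2)) h_pointwise
  rw [integral_div, integral_const_mul] at h
  exact h.trans (mul_le_of_le_one_right (by positivity) integral_erfc_le_one)

lemma abs_rescaling_mul_A₄_sub_le (hs : 0 < s) :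
    |rescaling s * A₄ (-s) - (log s + log 2 + eulerMascheroniConstant / 2) / (4 * s)|
      ≤ 3 / (4 * s ^ 2) := by
  have h_kernel := abs_rescaling_mul_A₄_sub_integral_le hs
  have h_gauss := abs_integral_erfc_div_mul_integral_tiltedGaussian_sub_le hs
  have h_log := abs_integral_erfc_div_mul_one_sub_exp_neg_sub_le (a := 4 * s) (by positivity)
  set I := ∫ u in Ioi 0, erfc u / u * ∫ t in (0)..u, tiltedGaussian s t
  set J := ∫ u in Ioi 0, erfc u / u * (1 - exp (-(4 * s * u)))
  have h_log_four_mul : log (4 * s) + eulerMascheroniConstant / 2 - log 2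
      = log s + log 2 + eulerMascheroniConstant / 2 := by
    rw [show 4 * s = 2 * (2 * s) by ring, log_mul two_ne_zero (by positivity),
      log_mul two_ne_zero hs.ne']
    ring
  rw [h_log_four_mul] at h_log
  have h_log_div : |J / (4 * s) - (log s + log 2 + eulerMascheroniConstant / 2) / (4 * s)|
      ≤ 2 / (4 * s) ^ 2 := by
    rw [← sub_div, abs_div, abs_of_pos (by positivity : 0 < 4 * s), sq, ← div_div 2]
    exact div_le_div_of_nonneg_right h_log (by positivity)
  calc |rescaling s * A₄ (-s) - (log s + log 2 + eulerMascheroniConstant / 2) / (4 * s)|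
      ≤ |rescaling s * A₄ (-s) - I| + (|I - J / (4 * s)| +
          |J / (4 * s) - (log s + log 2 + eulerMascheroniConstant / 2) / (4 * s)|) :=
        (abs_sub_le _ I _).trans (by gcongr; exact abs_sub_le _ _ _)
    _ ≤ 6 / (4 * s) ^ 2 + (4 / (4 * s) ^ 2 + 2 / (4 * s) ^ 2) := by gcongr
    _ = 3 / (4 * s ^ 2) := by ring

end FourthTerm

lemma abs_rescaling_mul_A_sub_le {s : ℝ} (hs : 0 < s) :
    |rescaling s * A (-s)
        - (s / 2 + (log s + ((eulerMascheroniConstant - 1) / 2 + log 2)) / (4 * s))|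
      ≤ 1 / s ^ 2 := by
  have h₁ := abs_rescaling_mul_A₁_add_le hs
  have h₂ := abs_rescaling_mul_A₂_le hs
  have h₃ := abs_rescaling_mul_A₃_sub_le hs
  have h₄ := abs_rescaling_mul_A₄_sub_le hs
  calc |rescaling s * A (-s)
        - (s / 2 + (log s + ((eulerMascheroniConstant - 1) / 2 + log 2)) / (4 * s))|
      = |(rescaling s * A₁ (-s) + 1 / (8 * s)) + rescaling s * A₂ (-s)
          + (rescaling s * A₃ (-s) - s / 2) + (rescaling s * A₄ (-s)
            - (log s + log 2 + eulerMascheroniConstant / 2) / (4 * s))| := by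
        rw [A]
        congr 1
        ring
    _ ≤ 1 / (8 * s ^ 2) + 1 / (16 * s ^ 2) + 1 / (16 * s ^ 2) + 3 / (4 * s ^ 2) := by
        refine (abs_add_le _ _).trans (add_le_add ?_ h₄)
        refine (abs_add_le _ _).trans (add_le_add ?_ h₃)
        exact (abs_add_le _ _).trans (add_le_add h₁ h₂)
    _ = 1 / s ^ 2 := by ring

theorem A_asymptotic_expansion_general {y : ℝ} (hy : y < 0) :
    abs (A y - 1 / (2 * √(2 * π)) * |y| * exp (-2 * y ^ 2)
        - 1 / (4 * √(2 * π)) * (log |y| / |y|) * exp (-2 * y ^ 2)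
        - 1 / (4 * √(2 * π)) * ((eulerMascheroniConstant - 1) / 2 + log 2)
          * exp (-2 * y ^ 2) / |y|)
      ≤ 1 / √(2 * π) * exp (-2 * y ^ 2) / y ^ 2 := by
  obtain ⟨s, rfl⟩ : ∃ s, y = -s := ⟨-y, (neg_neg y).symm⟩
  have hs : 0 < s := neg_lt_zero.1 hy
  have h_pos := rescaling_pos s
  have h_exp : exp (-2 * (-s) ^ 2) = √(2 * π) / rescaling s := by
    rw [eq_div_iff h_pos.ne', mul_comm, ← rescaling_mul_exp_neg s]
    ring_nf
  rw [abs_neg, abs_of_pos hs, h_exp, neg_sq]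
  calc _ = |rescaling s * A (-s)
          - (s / 2 + (log s + ((eulerMascheroniConstant - 1) / 2 + log 2)) / (4 * s))|
            / rescaling s := by
        rw [← abs_of_pos h_pos, ← abs_div, abs_of_pos h_pos]
        congr 1
        field_simp
        ring
    _ ≤ 1 / s ^ 2 / rescaling s := by
        gcongr
        exact abs_rescaling_mul_A_sub_le hs
    _ = 1 / √(2 * π) * (√(2 * π) / rescaling s) / s ^ 2 := by field_simp

/-- Full asymptotic expansion of `A` as `y → −∞`, with `γ` the Euler–Mascheroni constant. -/
theorem A_asymptotic_expansion :
    ∃ C > (0 : ℝ), ∃ y₀ < (0 : ℝ), ∀ y ≤ y₀,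
      abs (A y -
          (1 / (2 * Real.sqrt (2 * Real.pi))) * |y| * Real.exp (-2 * y ^ 2) -
          (1 / (4 * Real.sqrt (2 * Real.pi))) * (Real.log |y| / |y|) * Real.exp (-2 * y ^ 2) -
          (1 / (4 * Real.sqrt (2 * Real.pi))) *
            ((Real.eulerMascheroniConstant - 1) / 2 + Real.log 2) *
            Real.exp (-2 * y ^ 2) / |y|) ≤
        C * Real.exp (-2 * y ^ 2) / y ^ 2 :=
  ⟨1 / √(2 * π), by positivity, -1, neg_one_lt_zero, fun _ hy =>
    A_asymptotic_expansion_general (hy.trans_lt neg_one_lt_zero)⟩
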